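/- Let p ≥ 1, k ≥ 1, 1 ≤ i ≤ p, let f : Finset E → ℝ be non-negative, monotone, submodular, let O be a finset with |O| ≤ k and f(O) = OPT, and let S be a finset such that f(o|S) ≤ (p/(p+1))^i · OPT/k for every o ∈ O. Then f(S) ≥ (1 − (p/(p+1))^i) · OPT. -/

import Mathlib

/-!
Add the elements of `O` to `S` one at a time. By submodularity each step gains at most the marginal
gain of the added element with respect to `S` itself, so with `r = (p/(p+1))^i`,
`OPT = f O ≤ f (S ∪ O) ≤ f S + |O| · (r · OPT / k) ≤ f S + r · OPT`.
-/

open Finset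

section

variable {E R : Type*} [DecidableEq E]

/-- The marginal gain `f(e | S)` of an element `e` with respect to a finset `S`. It is defined for
every `e`, and vanishes on the elements of `S`. -/
def marginalGain [Sub R] (f : Finset E → R) (S : Finset E) (e : E) : R :=
  f (insert e S) - f S

/-- Submodularity of a set function, in its diminishing-returns form: the marginal gain of an
element outside `Y` does not increase when the base set grows to `Y`. -/
def IsSubmodular [Sub R] [LE R] (f : Finset E → R) : Prop :=
  ∀ ⦃X Y : Finset E⦄, X ⊆ Y → ∀ e ∉ Y, marginalGain f Y e ≤ marginalGain f X e

theorem marginalGain_eq_zero_of_mem [AddGroup R] (f : Finset E → R) {S : Finset E} {e : E}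
    (he : e ∈ S) : marginalGain f S e = 0 := by
  rw [marginalGain, insert_eq_of_mem he, sub_self]

namespace IsSubmodular

variable [AddCommGroup R] [PartialOrder R] [IsOrderedAddMonoid R] {f : Finset E → R}

theorem apply_union_le_add_sum_marginalGain (hf : IsSubmodular f) (S T : Finset E) :
    f (S ∪ T) ≤ f S + ∑ e ∈ T, marginalGain f S e := by
  induction T using Finset.induction_on with
  | empty => simp
  | insert a T haT ih =>
    have gain_le : marginalGain f (S ∪ T) a ≤ marginalGain f S a := by
      by_cases haS : a ∈ S
      · rw [marginalGain_eq_zero_of_mem f haS,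
          marginalGain_eq_zero_of_mem f (mem_union_left T haS)]
      · exact hf subset_union_left a (by simp [haS, haT])
    calc
      f (S ∪ insert a T) = marginalGain f (S ∪ T) a + f (S ∪ T) := by
        rw [marginalGain, union_insert, sub_add_cancel]
      _ ≤ marginalGain f S a + (f S + ∑ e ∈ T, marginalGain f S e) := add_le_add gain_le ih
      _ = f S + ∑ e ∈ insert a T, marginalGain f S e := by
        rw [sum_insert haT, add_left_comm]

theorem apply_le_add_card_nsmul (hf : IsSubmodular f) (hmono : Monotone f) {S T : Finset E} {c : R}
    (hgain : ∀ e ∈ T, marginalGain f S e ≤ c) : f T ≤ f S + #T • c :=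
  calc
    f T ≤ f (S ∪ T) := hmono subset_union_right
    _ ≤ f S + ∑ e ∈ T, marginalGain f S e := hf.apply_union_le_add_sum_marginalGain S T
    _ ≤ f S + #T • c := by gcongr; exact sum_le_card_nsmul T _ c hgain

end IsSubmodular

theorem stmt_3_general [Field R] [LinearOrder R] [IsStrictOrderedRing R] {f : Finset E → R}
    (hmono : Monotone f) (hf : IsSubmodular f) {S O : Finset E} {k : ℕ} {r : R} (hk : 0 < k)
    (hr : 0 ≤ r) (hO : 0 ≤ f O) (hcard : #O ≤ k)
    (hgain : ∀ o ∈ O, marginalGain f S o ≤ r * f O / k) : (1 - r) * f O ≤ f S := by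
  have hthreshold : 0 ≤ r * f O / k := by positivity
  have hle : f O ≤ f S + r * f O :=
    calc
      f O ≤ f S + #O • (r * f O / k) := hf.apply_le_add_card_nsmul hmono hgain
      _ ≤ f S + k • (r * f O / k) := by grw [nsmul_le_nsmul_left hthreshold hcard]
      _ = f S + r * f O := by
        rw [nsmul_eq_mul, mul_div_cancel₀ _ (Nat.cast_ne_zero.mpr hk.ne')]
  linarith

end

/-- If every element of `O` has marginal gain at most `(p/(p+1))^i · OPT/k`
with respect to `S`, then `f S ≥ (1 − (p/(p+1))^i)·OPT`. -/
theorem stmt_3 {E : Type*} [DecidableEq E]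
    (p k i : ℕ) (hp : 1 ≤ p) (hk : 1 ≤ k) (hi1 : 1 ≤ i) (hip : i ≤ p)
    (f : Finset E → ℝ)
    (hnonneg : ∀ X : Finset E, 0 ≤ f X)
    (hmono : ∀ X Y : Finset E, X ⊆ Y → f X ≤ f Y)
    (hsubmod : ∀ X Y : Finset E, X ⊆ Y → ∀ e ∉ Y,
      f (insert e Y) - f Y ≤ f (insert e X) - f X)
    (O : Finset E) (OPT : ℝ) (hOcard : O.card ≤ k) (hOPT : f O = OPT)
    (S : Finset E)
    (hthr : ∀ o ∈ O, f (insert o S) - f S ≤ ((p : ℝ) / (p + 1)) ^ i * OPT / k) :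
    f S ≥ (1 - ((p : ℝ) / (p + 1)) ^ i) * OPT := by
  subst hOPT
  exact stmt_3_general hmono hsubmod hk (by positivity) (hnonneg O) hOcard hthr
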